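/- arXiv:2003.02866 — 2 statements merged into one kernel-verified Lean document; each statement's English description precedes it below -/
import Mathlib

section
/- Let M_k be a maximum-weight k-matching in a weighted graph G that admits a (k+1)-matching, and let P be an augmenting path relative to M_k with maximum weight-gain wt(P \ M_k) - wt(P ∩ M_k). Then M_k ⊕ P (the symmetric difference) is a maximum-weight (k+1)-matching in G. -/
open SimpleGraph Finset
open scoped symmDiff

/-- `M` is a matching in `G`: a set of edges of `G`, pairwise vertex-disjoint. -/
def IsMatching {V : Type*} (G : SimpleGraph V) (M : Finset (Sym2 V)) : Prop :=
  (∀ e ∈ M, e ∈ G.edgeSet) ∧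
  ∀ e ∈ M, ∀ f ∈ M, e ≠ f → ∀ v : V, v ∈ e → v ∉ f

/-- `p` is an augmenting path relative to the matching `M`: a simple path whose two
endpoints are uncovered by `M` and whose edges alternate, starting and ending with
edges not in `M`. -/
def IsAugPath {V : Type*} (G : SimpleGraph V) (M : Finset (Sym2 V))
    {u v : V} (p : G.Walk u v) : Prop :=
  p.IsPath ∧ ¬ (∃ e ∈ M, u ∈ e) ∧ ¬ (∃ e ∈ M, v ∈ e) ∧
  Odd p.edges.length ∧
  ∀ (i : ℕ) (h : i < p.edges.length), (p.edges.get ⟨i, h⟩ ∈ M ↔ Odd i)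

/-- The weight-gain `wt(P \ M) - wt(P ∩ M)` of an augmenting path with edge list `P`. -/
def Gain {V : Type*} [DecidableEq V] (wt : Sym2 V → ℝ) (M P : Finset (Sym2 V)) : ℝ :=
  ∑ e ∈ P \ M, wt e - ∑ e ∈ P ∩ M, wt e

theorem edges_getElem_aux {V : Type*} {G : SimpleGraph V} {a b : V} (q : G.Walk a b) (i : ℕ)
    (h : i < q.edges.length) : q.edges[i] = s(q.getVert i, q.getVert (i + 1)) := by
  induction q generalizing i with
  | nil => simp at h
  | cons hadj q ih =>
    cases i with
    | zero => simp
    | succ i =>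
      simp only [Walk.edges_cons, List.getElem_cons_succ, Walk.getVert_cons_succ]
      exact ih i _

theorem mem_edges_aux {V : Type*} {G : SimpleGraph V} {a b : V} (q : G.Walk a b) (e : Sym2 V) :
    e ∈ q.edges ↔ ∃ i, i < q.length ∧ e = s(q.getVert i, q.getVert (i + 1)) := by
  rw [List.mem_iff_getElem]
  constructor
  · rintro ⟨i, h, rfl⟩
    exact ⟨i, by simpa using h, edges_getElem_aux q i h⟩
  · rintro ⟨i, h, rfl⟩
    exact ⟨i, by simpa using h, edges_getElem_aux q i _⟩

theorem switch_aux {V : Type*} [DecidableEq V] {G : SimpleGraph V} {M : Finset (Sym2 V)}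
    (hM : IsMatching G M) {a b : V} (q : G.Walk a b) (hq : q.IsPath)
    (h1 : ∀ i, i + 1 < q.length → s(q.getVert i, q.getVert (i + 1)) ∈ M ∨
      s(q.getVert (i + 1), q.getVert (i + 1 + 1)) ∈ M)
    (h2 : ∀ x ∈ q.support, (∃ e ∈ M, x ∈ e) → ∃ e ∈ M, e ∈ q.edges ∧ x ∈ e) :
    IsMatching G (M ∆ q.edges.toFinset) := by
  have hmix : ∀ e f, e ∈ M → e ∉ q.edges → f ∈ q.edges → ∀ x, x ∈ e → x ∈ f → False := by
    intro e f he heq hf x hxe hxf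
    have hx : x ∈ q.support := Walk.mem_support_of_mem_edges hf hxf
    obtain ⟨g, hg, hgq, hxg⟩ := h2 x hx ⟨e, he, hxe⟩
    have : e ≠ g := fun h => heq (h ▸ hgq)
    exact hM.2 e he g hg this x hxe hxg
  have hinj := hq.getVert_injOn
  have key : ∀ i j, i < j → j < q.length → s(q.getVert i, q.getVert (i + 1)) ∉ M →
      s(q.getVert j, q.getVert (j + 1)) ∉ M → ∀ x, x ∈ s(q.getVert i, q.getVert (i + 1)) →
      x ∈ s(q.getVert j, q.getVert (j + 1)) → False := by
    intro i j hij hj hi hjM x hxi hxj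
    have hne : i + 1 ≠ j := by
      rintro rfl
      rcases h1 i hj with h | h
      · exact hi h
      · exact hjM h
    have inj : ∀ s t, s ≤ q.length → t ≤ q.length → q.getVert s = q.getVert t → s = t :=
      fun s t hs ht h => hinj hs ht h
    rw [Sym2.mem_iff] at hxi hxj
    rcases hxi with rfl | rfl <;> rcases hxj with h | h
    · have := inj _ _ (by omega) (by omega) h; omega
    · have := inj _ _ (by omega) (by omega) h; omega
    · have := inj _ _ (by omega) (by omega) h; omega
    · have := inj _ _ (by omega) (by omega) h; omega
  refine ⟨?_, ?_⟩
  · intro e he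
    rw [Finset.mem_symmDiff, List.mem_toFinset] at he
    rcases he with ⟨h, -⟩ | ⟨h, -⟩
    · exact hM.1 e h
    · exact Walk.edges_subset_edgeSet q h
  · intro e he f hf hef x hxe hxf
    rw [Finset.mem_symmDiff, List.mem_toFinset] at he hf
    rcases he with ⟨he, he'⟩ | ⟨he, he'⟩ <;> rcases hf with ⟨hf, hf'⟩ | ⟨hf, hf'⟩
    · exact hM.2 e he f hf hef x hxe hxf
    · exact hmix e f he he' hf x hxe hxf
    · exact hmix f e hf hf' he x hxf hxe
    · obtain ⟨i, hi, rfl⟩ := (mem_edges_aux q e).1 he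
      obtain ⟨j, hj, rfl⟩ := (mem_edges_aux q f).1 hf
      rcases lt_trichotomy i j with h | h | h
      · exact key i j h hj he' hf' x hxe hxf
      · subst h; exact hef rfl
      · exact key j i h hi hf' he' x hxf hxe

/-- `l` alternates: positions of odd index lie in `M`, those of even index in `N`. -/
def AltL {α : Type*} (M N : Finset α) (l : List α) : Prop :=
  ∀ (i : ℕ) (h : i < l.length), (l[i] ∈ M ↔ Odd i) ∧ (l[i] ∈ N ↔ Even i)

theorem altL_cons {α : Type*} (M N : Finset α) (e : α) (l : List α) :
    AltL M N (e :: l) ↔ e ∉ M ∧ e ∈ N ∧ AltL N M l := by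
  constructor
  · intro h
    refine ⟨?_, ?_, ?_⟩
    · have := (h 0 (by simp)).1; simpa using this
    · have := (h 0 (by simp)).2; simpa using this
    · intro i hi
      have := h (i + 1) (by simpa using hi)
      simp only [List.getElem_cons_succ] at this
      grind
  · rintro ⟨h1, h2, h3⟩ i hi
    cases i with
    | zero => simp [h1, h2]
    | succ i =>
      have := h3 i (by simpa using hi)
      simp only [List.getElem_cons_succ]
      grind

theorem altL_reverse {α : Type*} {M N : Finset α} {l : List α} (h : AltL M N l)
    (hl : Odd l.length) : AltL M N l.reverse := by
  intro i hi
  rw [List.getElem_reverse]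
  rw [List.length_reverse] at hi
  have := h (l.length - 1 - i) (by omega)
  obtain ⟨m, hm⟩ := hl
  have e1 : Odd (l.length - 1 - i) ↔ Odd i := by
    rw [Nat.odd_iff, Nat.odd_iff]; omega
  have e2 : Even (l.length - 1 - i) ↔ Even i := by
    rw [Nat.even_iff, Nat.even_iff]; omega
  rw [e1, e2] at this
  exact this

theorem altL_congr {α : Type*} {M N M' N' : Finset α} {l : List α} (h : AltL M N l)
    (h1 : ∀ e ∈ l, (e ∈ M' ↔ e ∈ M)) (h2 : ∀ e ∈ l, (e ∈ N' ↔ e ∈ N)) : AltL M' N' l := by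
  intro i hi
  rw [h1 _ (List.getElem_mem hi), h2 _ (List.getElem_mem hi)]
  exact h i hi

theorem altL_card {α : Type*} [DecidableEq α] (l : List α) (M N : Finset α) (h : AltL M N l)
    (hl : l.Nodup) : (l.toFinset ∩ M).card = l.length / 2 ∧
      (l.toFinset ∩ N).card = (l.length + 1) / 2 := by
  induction l generalizing M N with
  | nil => simp
  | cons e l ih =>
    rw [altL_cons] at h
    obtain ⟨h1, h2, h3⟩ := h
    rw [List.nodup_cons] at hl
    obtain ⟨i1, i2⟩ := ih N M h3 hl.2
    rw [List.toFinset_cons, Finset.insert_inter_of_notMem h1, Finset.insert_inter_of_mem h2,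
      Finset.card_insert_of_notMem (by simp [hl.1]), i1, i2, List.length_cons]
    omega

theorem altL_disj {α : Type*} {M N : Finset α} {l : List α} (h : AltL M N l) :
    ∀ e ∈ l, (e ∈ N ↔ e ∉ M) := by
  intro e he
  obtain ⟨i, hi, rfl⟩ := List.mem_iff_getElem.1 he
  have := h i hi
  rw [this.1, this.2, Nat.not_odd_iff_even]

/-- every vertex of an alternating path of odd length is covered by an `N`-edge of the path -/
theorem cover_N {V : Type*} {G : SimpleGraph V} {M N : Finset (Sym2 V)}
    {a b : V} (q : G.Walk a b) (hodd : Odd q.edges.length) (h : AltL M N q.edges) :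
    ∀ x ∈ q.support, ∃ e ∈ N, e ∈ q.edges ∧ x ∈ e := by
  intro x hx
  rw [Walk.mem_support_iff_exists_getVert] at hx
  obtain ⟨j, rfl, hj⟩ := hx
  obtain ⟨m, hm⟩ := hodd
  have hlen := q.length_edges
  rcases Nat.even_or_odd j with hj2 | hj2
  · have hlt : j < q.edges.length := by
      rw [Nat.even_iff] at hj2; omega
    refine ⟨q.edges[j], (h j hlt).2.2 hj2, List.getElem_mem _, ?_⟩
    rw [edges_getElem_aux]; simp
  · obtain ⟨t, rfl⟩ := hj2
    have hlt : 2 * t < q.edges.length := by omega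
    refine ⟨q.edges[2 * t], (h _ hlt).2.2 (by simp), List.getElem_mem _, ?_⟩
    rw [edges_getElem_aux]; simp

/-- every non-end vertex of an alternating path is covered by an `M`-edge of the path -/
theorem cover_M {V : Type*} {G : SimpleGraph V} {M N : Finset (Sym2 V)}
    {a b : V} (q : G.Walk a b) (hodd : Odd q.edges.length) (h : AltL M N q.edges) :
    ∀ x ∈ q.support, x = a ∨ x = b ∨ ∃ e ∈ M, e ∈ q.edges ∧ x ∈ e := by
  intro x hx
  rw [Walk.mem_support_iff_exists_getVert] at hx
  obtain ⟨j, rfl, hj⟩ := hx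
  obtain ⟨m, hm⟩ := hodd
  have hlen := q.length_edges
  by_cases h0 : j = 0
  · left; simp [h0]
  by_cases h3 : j = q.length
  · right; left; simp [h3]
  right; right
  rcases Nat.even_or_odd j with hj2 | hj2
  · obtain ⟨t, rfl⟩ : ∃ t, j = t + 1 := ⟨j - 1, by omega⟩
    have hlt : t < q.edges.length := by omega
    refine ⟨q.edges[t], (h _ hlt).1.2 (by grind), List.getElem_mem _, ?_⟩
    rw [edges_getElem_aux]; simp
  · have hlt : j < q.edges.length := by omega
    refine ⟨q.edges[j], (h j hlt).1.2 hj2, List.getElem_mem _, ?_⟩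
    rw [edges_getElem_aux]; simp

theorem alt_consec {V : Type*} {G : SimpleGraph V} {M N : Finset (Sym2 V)}
    {a b : V} (q : G.Walk a b) (h : AltL M N q.edges) (i : ℕ) (hi : i + 1 < q.length) :
    (s(q.getVert i, q.getVert (i + 1)) ∈ M ∨
      s(q.getVert (i + 1), q.getVert (i + 1 + 1)) ∈ M) ∧
    (s(q.getVert i, q.getVert (i + 1)) ∈ N ∨
      s(q.getVert (i + 1), q.getVert (i + 1 + 1)) ∈ N) := by
  have hlen := q.length_edges
  have h1 := h i (by omega)
  have h2 := h (i + 1) (by omega)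
  rw [edges_getElem_aux] at h1 h2
  grind

theorem switch_M {V : Type*} [DecidableEq V] {G : SimpleGraph V} {M N : Finset (Sym2 V)}
    (hM : IsMatching G M) {a b : V} (q : G.Walk a b) (hq : q.IsPath)
    (ha : ¬ ∃ e ∈ M, a ∈ e) (hb : ¬ ∃ e ∈ M, b ∈ e)
    (hodd : Odd q.edges.length) (h : AltL M N q.edges) :
    IsMatching G (M ∆ q.edges.toFinset) := by
  refine switch_aux hM q hq (fun i hi => (alt_consec q h i hi).1) ?_
  intro x hx hxe
  rcases cover_M q hodd h x hx with rfl | rfl | h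
  · exact absurd hxe ha
  · exact absurd hxe hb
  · exact h

theorem switch_N {V : Type*} [DecidableEq V] {G : SimpleGraph V} {M N : Finset (Sym2 V)}
    (hN : IsMatching G N) {a b : V} (q : G.Walk a b) (hq : q.IsPath)
    (hodd : Odd q.edges.length) (h : AltL M N q.edges) :
    IsMatching G (N ∆ q.edges.toFinset) :=
  switch_aux hN q hq (fun i hi => (alt_consec q h i hi).2)
    (fun x hx _ => cover_N q hodd h x hx)

theorem card_symmDiff_aux {α : Type*} [DecidableEq α] (M P : Finset α) :
    (M ∆ P).card + 2 * (P ∩ M).card = M.card + P.card := by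
  have h1 : (M ∆ P).card = (M \ P).card + (P \ M).card := by
    rw [← Finset.card_union_of_disjoint (disjoint_sdiff_sdiff)]; rfl
  have h2 := Finset.card_sdiff_add_card_inter M P
  have h3 := Finset.card_sdiff_add_card_inter P M
  rw [Finset.inter_comm] at h2
  omega

theorem sum_symmDiff_aux {V : Type*} [DecidableEq V] (wt : Sym2 V → ℝ) (M P : Finset (Sym2 V)) :
    ∑ e ∈ M ∆ P, wt e = ∑ e ∈ M, wt e + Gain wt M P := by
  have h1 : ∑ e ∈ M ∆ P, wt e = ∑ e ∈ M \ P, wt e + ∑ e ∈ P \ M, wt e := by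
    rw [← Finset.sum_union (disjoint_sdiff_sdiff)]; rfl
  have h2 := Finset.sum_inter_add_sum_sdiff M P wt
  rw [Finset.inter_comm] at h2
  rw [h1, ← h2, Gain]
  ring

theorem card_cover {V : Type*} [DecidableEq V] {G : SimpleGraph V} {M : Finset (Sym2 V)}
    (hM : IsMatching G M) : (M.biUnion Sym2.toFinset).card = M.card * 2 := by
  rw [Finset.card_biUnion]
  · rw [Finset.sum_const_nat]
    intro e he
    exact Sym2.card_toFinset_of_not_isDiag e (G.not_isDiag_of_mem_edgeSet (hM.1 e he))
  · intro e he f hf hef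
    rw [Function.onFun, Finset.disjoint_left]
    intro x hx hx'
    rw [Sym2.mem_toFinset] at hx hx'
    exact hM.2 e he f hf hef x hx hx'

theorem matching_erase {V : Type*} [DecidableEq V] {G : SimpleGraph V} {M : Finset (Sym2 V)}
    (hM : IsMatching G M) (e : Sym2 V) : IsMatching G (M.erase e) :=
  ⟨fun f hf => hM.1 f (Finset.mem_of_mem_erase hf), fun f hf g hg =>
    hM.2 f (Finset.mem_of_mem_erase hf) g (Finset.mem_of_mem_erase hg)⟩

theorem exists_aug {V : Type*} [DecidableEq V] {G : SimpleGraph V} (n : ℕ) :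
    ∀ M N : Finset (Sym2 V), IsMatching G M → IsMatching G N → M.card = n → M.card < N.card →
    ∃ (a b : V) (q : G.Walk a b), q.IsPath ∧ (¬ ∃ e ∈ M, a ∈ e) ∧ (¬ ∃ e ∈ M, b ∈ e) ∧
      Odd q.edges.length ∧ AltL M N q.edges := by
  induction n with
  | zero =>
    intro M N hM hN hc hlt
    obtain ⟨e, he⟩ : N.Nonempty := Finset.card_pos.1 (by omega)
    have hM0 : M = ∅ := Finset.card_eq_zero.1 hc
    subst hM0
    induction e with | _ a b =>
    have hadj : G.Adj a b := hN.1 _ he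
    refine ⟨a, b, Walk.cons hadj Walk.nil, ?_, by simp, by simp, by simp, ?_⟩
    · simp [hadj.ne]
    · rw [Walk.edges_cons, altL_cons]
      refine ⟨by simp, he, ?_⟩
      intro i hi
      simp at hi
  | succ n ih =>
    intro M N hM hN hc hlt
    obtain ⟨a, haN, haM⟩ : ∃ a ∈ N.biUnion Sym2.toFinset, a ∉ M.biUnion Sym2.toFinset := by
      apply Finset.exists_mem_notMem_of_card_lt_card
      rw [card_cover hM, card_cover hN]; omega
    simp only [Finset.mem_biUnion, Sym2.mem_toFinset] at haN haM
    obtain ⟨e, he, hae⟩ := haN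
    obtain ⟨b, rfl⟩ := Sym2.mem_iff_exists.1 hae
    have hadj : G.Adj a b := hN.1 _ he
    have habM : s(a, b) ∉ M := fun h => haM ⟨_, h, hae⟩
    by_cases hbM : ∃ e ∈ M, b ∈ e
    · obtain ⟨f, hf, hbf⟩ := hbM
      obtain ⟨c, rfl⟩ := Sym2.mem_iff_exists.1 hbf
      have hadj2 : G.Adj b c := hM.1 _ hf
      have hbcN : s(b, c) ∉ N := by
        intro h
        have hne : s(a, b) ≠ s(b, c) := fun h' => habM (h' ▸ hf)
        exact hN.2 _ he _ h hne b (by simp) (by simp)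
      obtain ⟨x, y, q, hq, hx, hy, hodd, halt⟩ := ih (M.erase s(b, c)) (N.erase s(a, b))
        (matching_erase hM _) (matching_erase hN _)
        (by rw [Finset.card_erase_of_mem hf]; omega)
        (by rw [Finset.card_erase_of_mem hf, Finset.card_erase_of_mem he]; omega)
      have hcov := cover_N q hodd halt
      have hav : ∀ z, z ∈ s(a, b) → z ∉ q.support := by
        intro z hz hzq
        obtain ⟨g, hg, -, hzg⟩ := hcov z hzq
        rw [Finset.mem_erase] at hg
        exact hN.2 g hg.2 _ he hg.1 z hzg hz
      have haq := hav a (by simp)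
      have hbq := hav b (by simp)
      have halt' : AltL M N q.edges := by
        refine altL_congr halt ?_ ?_
        · intro g hg
          have : g ≠ s(b, c) := by
            rintro rfl
            exact hbq (Walk.mem_support_of_mem_edges hg (by simp))
          simp [this]
        · intro g hg
          have : g ≠ s(a, b) := by
            rintro rfl
            exact hbq (Walk.mem_support_of_mem_edges hg (by simp))
          simp [this]
      -- coverage by `M` of vertices on the path
      have hMcov : ∀ z ∈ q.support, z ≠ c → (¬ ∃ e ∈ M.erase s(b, c), z ∈ e) →
          ¬ ∃ e ∈ M, z ∈ e := by
        rintro z hz hzc hnot ⟨g, hg, hzg⟩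
        by_cases hgb : g = s(b, c)
        · subst hgb
          rw [Sym2.mem_iff] at hzg
          rcases hzg with rfl | rfl
          · exact hbq hz
          · exact hzc rfl
        · exact hnot ⟨g, Finset.mem_erase.2 ⟨hgb, hg⟩, hzg⟩
      have hac : a ≠ c := by
        rintro rfl
        exact haM ⟨_, hf, by simp⟩
      have ext : ∀ (w : V) (r : G.Walk c w), r.IsPath → a ∉ r.support → b ∉ r.support →
          (¬ ∃ e ∈ M.erase s(b, c), w ∈ e) → Odd r.edges.length → AltL M N r.edges →
          ∃ (a b : V) (q : G.Walk a b), q.IsPath ∧ (¬ ∃ e ∈ M, a ∈ e) ∧ (¬ ∃ e ∈ M, b ∈ e) ∧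
          Odd q.edges.length ∧ AltL M N q.edges := by
        intro w r hr har hbr hw hro hra
        refine ⟨a, w, Walk.cons hadj (Walk.cons hadj2 r), ?_, haM, ?_, ?_, ?_⟩
        · rw [Walk.cons_isPath_iff, Walk.cons_isPath_iff]
          refine ⟨⟨hr, hbr⟩, ?_⟩
          rw [Walk.support_cons, List.mem_cons]
          rintro (h | h)
          · exact hadj.ne h
          · exact har h
        · rintro ⟨g, hg, hwg⟩
          by_cases hgb : g = s(b, c)
          · subst hgb
            rw [Sym2.mem_iff] at hwg
            rcases hwg with rfl | rfl
            · exact hbr r.end_mem_support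
            · have : r = Walk.nil := Walk.nil_iff_eq_nil.1 (Walk.isPath_iff_nil.1 hr)
              subst this
              simp at hro
          · exact hw ⟨g, Finset.mem_erase.2 ⟨hgb, hg⟩, hwg⟩
        · simp only [Walk.edges_cons, List.length_cons]
          grind
        · rw [Walk.edges_cons, Walk.edges_cons, altL_cons, altL_cons]
          exact ⟨habM, he, hbcN, hf, hra⟩
      by_cases hxc : x = c
      · subst hxc
        exact ext y q hq haq hbq hy hodd halt'
      by_cases hyc : y = c
      · subst hyc
        refine ext x q.reverse hq.reverse (by simpa using haq) (by simpa using hbq) hx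
          (by simpa using hodd) ?_
        rw [Walk.edges_reverse]
        exact altL_reverse halt' hodd
      exact ⟨x, y, q, hq, hMcov x q.start_mem_support hxc hx, hMcov y q.end_mem_support hyc hy,
        hodd, halt'⟩
    · refine ⟨a, b, Walk.cons hadj Walk.nil, ?_, haM, hbM, by simp, ?_⟩
      · simp [hadj.ne]
      · rw [Walk.edges_cons, altL_cons]
        refine ⟨habM, he, ?_⟩
        intro i hi
        simp at hi

/-- Let `Mk` be a maximum-weight `k`-matching in a weighted graph `G` admitting a
`(k+1)`-matching, and let `p` be an augmenting path relative to `Mk` of maximum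
weight-gain. Then `Mk ⊕ p` is a maximum-weight `(k+1)`-matching in `G`. -/
theorem stmt_10 {V : Type*} [DecidableEq V] (G : SimpleGraph V) (wt : Sym2 V → ℝ)
    (k : ℕ) (Mk : Finset (Sym2 V)) (hMk : IsMatching G Mk) (hMkcard : Mk.card = k)
    (hMkmax : ∀ M' : Finset (Sym2 V), IsMatching G M' → M'.card = k →
      ∑ e ∈ M', wt e ≤ ∑ e ∈ Mk, wt e)
    (hex : ∃ M' : Finset (Sym2 V), IsMatching G M' ∧ M'.card = k + 1)
    {u v : V} (p : G.Walk u v) (hp : IsAugPath G Mk p)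
    (hpmax : ∀ (a b : V) (q : G.Walk a b), IsAugPath G Mk q →
      Gain wt Mk q.edges.toFinset ≤ Gain wt Mk p.edges.toFinset) :
    IsMatching G (Mk ∆ p.edges.toFinset) ∧
    (Mk ∆ p.edges.toFinset).card = k + 1 ∧
    ∀ M' : Finset (Sym2 V), IsMatching G M' → M'.card = k + 1 →
      ∑ e ∈ M', wt e ≤ ∑ e ∈ Mk ∆ p.edges.toFinset, wt e := by
  have hstep : ∀ (M N : Finset (Sym2 V)) (a b : V) (q : G.Walk a b), q.IsPath →
      Odd q.edges.length → AltL M N q.edges →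
      (M ∆ q.edges.toFinset).card = M.card + 1 ∧ (N ∆ q.edges.toFinset).card + 1 = N.card := by
    intro M N a b q hq hodd halt
    have hnd : q.edges.Nodup := hq.isTrail.edges_nodup
    obtain ⟨c1, c2⟩ := altL_card q.edges M N halt hnd
    have c3 := card_symmDiff_aux M q.edges.toFinset
    have c4 := card_symmDiff_aux N q.edges.toFinset
    rw [List.toFinset_card_of_nodup hnd] at c3 c4
    obtain ⟨m, hm⟩ := hodd
    omega
  obtain ⟨hpath, hu, hv, hodd, hal⟩ := hp
  have halt : AltL Mk (p.edges.toFinset \ Mk) p.edges := by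
    intro i hi
    have h1 := hal i hi
    rw [List.get_eq_getElem] at h1
    refine ⟨h1, ?_⟩
    rw [Finset.mem_sdiff, List.mem_toFinset, h1, Nat.not_odd_iff_even]
    exact ⟨fun h => h.2, fun h => ⟨List.getElem_mem _, h⟩⟩
  refine ⟨switch_M hMk p hpath hu hv hodd halt, ?_, ?_⟩
  · rw [(hstep _ _ _ _ p hpath hodd halt).1, hMkcard]
  · intro N hN hNc
    obtain ⟨a, b, q, hq, ha, hb, hqo, hqa⟩ := exists_aug Mk.card Mk N hMk hN rfl (by omega)
    have hg := hpmax a b q ⟨hq, ha, hb, hqo, fun i hi => (hqa i hi).1⟩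
    have hk := hMkmax _ (switch_N hN q hq hqo hqa)
      (by have := (hstep _ _ _ _ q hq hqo hqa).2; omega)
    have hd := altL_disj hqa
    have e1 : q.edges.toFinset \ N = q.edges.toFinset ∩ Mk := by
      ext e
      simp only [Finset.mem_sdiff, Finset.mem_inter, List.mem_toFinset]
      have := hd e
      tauto
    have e2 : q.edges.toFinset ∩ N = q.edges.toFinset \ Mk := by
      ext e
      simp only [Finset.mem_sdiff, Finset.mem_inter, List.mem_toFinset]
      have := hd e
      tauto
    have hneg : Gain wt N q.edges.toFinset = - Gain wt Mk q.edges.toFinset := by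
      rw [Gain, Gain, e1, e2]; ring
    rw [sum_symmDiff_aux, hneg] at hk
    rw [sum_symmDiff_aux]
    linarith
end

section
/- Let M_k be a maximum-weight k-matching and M_{k+1} a maximum-weight (k+1)-matching in a weighted graph G. Then at least one connected component of the symmetric difference M_k ⊕ M_{k+1} is an augmenting path relative to M_k, and its weight-gain equals wt(M_{k+1}) - wt(M_k). -/
open SimpleGraph Finset
open scoped symmDiff

theorem aux_cover_card {V : Type*} [DecidableEq V] {G : SimpleGraph V} {A : Finset (Sym2 V)}
    (hA : IsMatching G A) : (A.biUnion Sym2.toFinset).card = 2 * A.card := by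
  rw [Finset.card_biUnion]
  · rw [Finset.sum_congr rfl (g := fun _ => 2)]
    · simp [mul_comm]
    · intro e he
      exact Sym2.card_toFinset_of_not_isDiag e (G.not_isDiag_of_mem_edgeSet (hA.1 e he))
  · intro e he f hf hef
    rw [Function.onFun, Finset.disjoint_left]
    intro v hv hv'
    rw [Sym2.mem_toFinset] at hv hv'
    exact hA.2 e he f hf hef v hv hv'

theorem aux_exists_start {V : Type*} [DecidableEq V] {G : SimpleGraph V} {A B : Finset (Sym2 V)}
    (hA : IsMatching G A) (hB : IsMatching G B) (hc : A.card < B.card) :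
    ∃ u, (∃ e ∈ B, u ∈ e) ∧ ¬ ∃ e ∈ A, u ∈ e := by
  by_contra hcon
  push Not at hcon
  have hsub : B.biUnion Sym2.toFinset ⊆ A.biUnion Sym2.toFinset := by
    intro v hv
    rw [Finset.mem_biUnion] at hv ⊢
    obtain ⟨e, he, hve⟩ := hv
    obtain ⟨f, hf, hvf⟩ := hcon v ⟨e, he, Sym2.mem_toFinset.1 hve⟩
    exact ⟨f, hf, Sym2.mem_toFinset.2 hvf⟩
  have h := Finset.card_le_card hsub
  rw [aux_cover_card hA, aux_cover_card hB] at h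
  omega

/-- The invariant of an alternating walk grown from `u` (at its front end `v`). -/
structure GrowInv {V : Type*} [DecidableEq V] (G : SimpleGraph V) (A B : Finset (Sym2 V))
    {v u : V} (p : G.Walk v u) : Prop where
  path : p.IsPath
  sub : ∀ e ∈ p.edges, e ∈ A ∆ B
  closed : ∀ x ∈ p.support, x ≠ v → ∀ e ∈ A ∆ B, x ∈ e → e ∈ p.edges
  alt : ∀ (i : ℕ) (h : i < p.edges.length), (p.edges[i] ∈ A ↔ Even (p.edges.length - i))
  evn : Even p.edges.length → ∀ f ∈ A, v ∈ f → f ∈ p.edges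
  odd : Odd p.edges.length → ∀ f ∈ B, v ∈ f → f ∈ p.edges
  endp : ∀ f ∈ p.edges, v ∈ f → (f ∈ A ↔ Even p.edges.length)
  cardA : (p.edges.toFinset ∩ A).card = p.edges.length / 2
  cardB : (p.edges.toFinset ∩ B).card = (p.edges.length + 1) / 2

theorem GrowInv.step {V : Type*} [DecidableEq V] {G : SimpleGraph V} {A B : Finset (Sym2 V)}
    (hA : IsMatching G A) (hB : IsMatching G B)
    {v u w : V} {p : G.Walk v u} (hp : GrowInv G A B p) (hvw : s(w, v) ∈ A ∆ B)
    (hn : s(w, v) ∉ p.edges) (hadj : G.Adj w v) :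
    GrowInv G A B (Walk.cons hadj p) := by
  have hw : w ∉ p.support := by
    intro hw
    exact hn (hp.closed w hw hadj.ne _ hvw (by simp))
  have hD : ∀ e, e ∈ A ∆ B ↔ (e ∈ A ∧ e ∉ B) ∨ (e ∈ B ∧ e ∉ A) := fun e => Finset.mem_symmDiff
  have hA' : ∀ e ∈ A, ∀ f ∈ A, ∀ x, x ∈ e → x ∈ f → e = f := by
    intro e he f hf x hx hx'
    by_contra hne
    exact hA.2 e he f hf hne x hx hx'
  have hB' : ∀ e ∈ B, ∀ f ∈ B, ∀ x, x ∈ e → x ∈ f → e = f := by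
    intro e he f hf x hx hx'
    by_contra hne
    exact hB.2 e he f hf hne x hx hx'
  have hwm : w ∈ s(w, v) := by simp
  have hvm : v ∈ s(w, v) := by simp
  have hev : Even p.edges.length → s(w, v) ∈ B ∧ s(w, v) ∉ A := by
    intro h
    have : s(w, v) ∉ A := fun h' => hn (hp.evn h _ h' hvm)
    have := (hD _).1 hvw
    tauto
  have hod : Odd p.edges.length → s(w, v) ∈ A ∧ s(w, v) ∉ B := by
    intro h
    have : s(w, v) ∉ B := fun h' => hn (hp.odd h _ h' hvm)
    have := (hD _).1 hvw
    tauto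
  have hiff : s(w, v) ∈ A ↔ Even (p.edges.length + 1) := by
    rcases Nat.even_or_odd p.edges.length with h | h
    · have := hev h
      simpa [Nat.even_add_one, this] using h
    · have := hod h
      simpa [Nat.even_add_one, this] using h
  refine ⟨?_, ?_, ?_, ?_, ?_, ?_, ?_, ?_, ?_⟩
  · exact hp.path.cons hw
  · intro e he
    rw [Walk.edges_cons, List.mem_cons] at he
    rcases he with rfl | he
    · exact hvw
    · exact hp.sub e he
  · intro x hx hxw e he hxe
    rw [Walk.edges_cons, List.mem_cons]
    rw [Walk.support_cons, List.mem_cons] at hx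
    have hx := hx.resolve_left hxw
    by_cases hxv : x = v
    · subst hxv
      rcases Nat.even_or_odd p.edges.length with h | h
      · rcases (hD e).1 he with h1 | h1
        · exact Or.inr (hp.evn h e h1.1 hxe)
        · exact Or.inl (hB' e h1.1 _ (hev h).1 x hxe hvm)
      · rcases (hD e).1 he with h1 | h1
        · exact Or.inl (hA' e h1.1 _ (hod h).1 x hxe hvm)
        · exact Or.inr (hp.odd h e h1.1 hxe)
    · exact Or.inr (hp.closed x hx hxv e he hxe)
  · intro i h
    cases i with
    | zero => simpa using hiff
    | succ i => 
      have := hp.alt i (by simpa using h)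
      simpa using this
  · intro h f hf hwf
    rw [Walk.edges_cons, List.length_cons] at h
    rw [Walk.edges_cons, List.mem_cons]
    exact Or.inl (hA' f hf _ (hiff.2 h) w hwf hwm)
  · intro h f hf hwf
    rw [Walk.edges_cons, List.length_cons] at h
    rw [Walk.edges_cons, List.mem_cons]
    have h' : Even p.edges.length := by
      by_contra hne
      rw [Nat.odd_add_one] at h
      exact h (Nat.not_even_iff_odd.1 hne)
    exact Or.inl (hB' f hf _ (hev h').1 w hwf hwm)
  · intro f hf hwf
    rw [Walk.edges_cons, List.mem_cons] at hf
    rw [Walk.edges_cons, List.length_cons]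
    rcases hf with rfl | hf
    · exact hiff
    · exact absurd (Walk.mem_support_of_mem_edges hf hwf) hw
  · rw [Walk.edges_cons, List.length_cons, List.toFinset_cons]
    have := hp.cardA
    rcases Nat.even_or_odd p.edges.length with h | h
    · rw [Finset.insert_inter_of_notMem (hev h).2, this]
      obtain ⟨a, ha⟩ := h
      omega
    · rw [Finset.insert_inter_of_mem (hod h).1, Finset.card_insert_of_notMem (by simp [hn]), this]
      obtain ⟨a, ha⟩ := h
      omega
  · rw [Walk.edges_cons, List.length_cons, List.toFinset_cons]
    have := hp.cardB
    rcases Nat.even_or_odd p.edges.length with h | h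
    · rw [Finset.insert_inter_of_mem (hev h).1, Finset.card_insert_of_notMem (by simp [hn]), this]
      obtain ⟨a, ha⟩ := h
      omega
    · rw [Finset.insert_inter_of_notMem (hod h).2, this]
      obtain ⟨a, ha⟩ := h
      omega

theorem GrowInv.length_le {V : Type*} [DecidableEq V] {G : SimpleGraph V} {A B : Finset (Sym2 V)}
    {v u : V} {p : G.Walk v u} (hp : GrowInv G A B p) : p.edges.length ≤ (A ∆ B).card := by
  rw [← List.toFinset_card_of_nodup hp.path.isTrail.edges_nodup]
  apply Finset.card_le_card
  intro e he
  exact hp.sub e (List.mem_toFinset.1 he)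

theorem aux_grow {V : Type*} [DecidableEq V] {G : SimpleGraph V} {A B : Finset (Sym2 V)}
    (hA : IsMatching G A) (hB : IsMatching G B) (u : V) (n : ℕ) :
    ∀ (v : V) (p : G.Walk v u), GrowInv G A B p → (A ∆ B).card - p.edges.length ≤ n →
    ∃ (v : V) (p : G.Walk v u), GrowInv G A B p ∧ ∀ e ∈ A ∆ B, v ∈ e → e ∈ p.edges := by
  induction n with
  | zero =>
    intro v p hp hn
    refine ⟨v, p, hp, ?_⟩
    have hle := hp.length_le
    have : p.edges.toFinset = A ∆ B := by
      apply Finset.eq_of_subset_of_card_le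
      · intro e he
        exact hp.sub e (List.mem_toFinset.1 he)
      · rw [List.toFinset_card_of_nodup hp.path.isTrail.edges_nodup]
        omega
    intro e he _
    rw [← this] at he
    exact List.mem_toFinset.1 he
  | succ n ih =>
    intro v p hp hn
    by_cases hc : ∀ e ∈ A ∆ B, v ∈ e → e ∈ p.edges
    · exact ⟨v, p, hp, hc⟩
    · push Not at hc
      obtain ⟨e, he, hve, hne⟩ := hc
      obtain ⟨w, rfl⟩ := Sym2.mem_iff_exists.1 hve
      have hadj : G.Adj v w := by
        rcases Finset.mem_symmDiff.1 he with h | h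
        · exact hA.1 _ h.1
        · exact hB.1 _ h.1
      rw [Sym2.eq_swap] at he hne
      apply ih w (Walk.cons hadj.symm p) (hp.step hA hB he hne hadj.symm)
      rw [Walk.edges_cons, List.length_cons]
      omega

theorem IsMatching.mono' {V : Type*} {G : SimpleGraph V} {A A' : Finset (Sym2 V)}
    (hA : IsMatching G A) (h : A' ⊆ A) : IsMatching G A' :=
  ⟨fun e he => hA.1 e (h he), fun e he f hf => hA.2 e (h he) f (h hf)⟩

theorem aux_exists_aug {V : Type*} [DecidableEq V] {G : SimpleGraph V} (n : ℕ) :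
    ∀ (A B : Finset (Sym2 V)), IsMatching G A → IsMatching G B → A.card < B.card →
      B.card ≤ n →
    ∃ (u v : V) (p : G.Walk u v),
      IsAugPath G A p ∧ (∀ e ∈ p.edges, e ∈ A ∆ B) ∧
      (∀ e ∈ A ∆ B, (∃ x ∈ p.support, x ∈ e) → e ∈ p.edges) ∧
      (p.edges.toFinset ∩ B).card = (p.edges.toFinset ∩ A).card + 1 := by
  induction n with
  | zero => intro A B _ _ h1 h2; omega
  | succ n ih =>
    intro A B hA hB hc hn
    obtain ⟨u, ⟨e0, he0, hue0⟩, huA⟩ := aux_exists_start hA hB hc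
    have h0 : GrowInv G A B (Walk.nil : G.Walk u u) := by
      refine ⟨by simp, by simp, ?_, by simp, ?_, by simp, by simp, by simp, by simp⟩
      · intro x hx hxu
        simp at hx
        exact absurd hx hxu
      · intro _ f hf huf
        exact absurd ⟨f, hf, huf⟩ huA
    obtain ⟨v, p, hp, hterm⟩ := aux_grow hA hB u _ u _ h0 le_rfl
    have hcl : ∀ e ∈ A ∆ B, (∃ x ∈ p.support, x ∈ e) → e ∈ p.edges := by
      rintro e he ⟨x, hx, hxe⟩
      by_cases hxv : x = v
      · subst hxv; exact hterm e he hxe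
      · exact hp.closed x hx hxv e he hxe
    have hcA := hp.cardA
    have hcB := hp.cardB
    rcases Nat.even_or_odd p.edges.length with hl | hl
    · -- remove this component and recurse
      set P := p.edges.toFinset with hP
      have hmP : ∀ e, e ∈ P ↔ e ∈ p.edges := fun e => List.mem_toFinset
      have he0D : e0 ∈ A ∆ B :=
        Finset.mem_symmDiff.2 (Or.inr ⟨he0, fun h => huA ⟨e0, h, hue0⟩⟩)
      have he0P : e0 ∈ P := (hmP _).2 (hcl e0 he0D ⟨u, by simp, hue0⟩)
      have h1 := Finset.card_sdiff_add_card_inter A P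
      have h2 := Finset.card_sdiff_add_card_inter B P
      rw [Finset.inter_comm] at hcA hcB
      have hpos : 0 < (B ∩ P).card := Finset.card_pos.2 ⟨e0, Finset.mem_inter.2 ⟨he0, he0P⟩⟩
      obtain ⟨a, ha⟩ := hl
      obtain ⟨x, y, q, ⟨hq, hx, hy, hodd, halt⟩, hqs, hqc, hqcard⟩ :=
        ih (A \ P) (B \ P) (hA.mono' Finset.sdiff_subset) (hB.mono' Finset.sdiff_subset)
          (by omega) (by omega)
      have hDP : ∀ e, e ∈ (A \ P) ∆ (B \ P) ↔ e ∈ A ∆ B ∧ e ∉ P := by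
        intro e
        simp only [Finset.mem_symmDiff, Finset.mem_sdiff]
        tauto
      have hqP : ∀ e ∈ q.edges, e ∉ P := fun e he => ((hDP e).1 (hqs e he)).2
      have hqnn : ¬ q.Nil := by
        intro h
        rw [← Walk.length_eq_zero_iff, ← Walk.length_edges] at h
        rw [h] at hodd
        simp at hodd
      have hsupp : ∀ z ∈ q.support, z ∉ p.support := by
        intro z hz hzp
        obtain ⟨e, he, hze⟩ := (Walk.mem_support_iff_exists_mem_edges_of_not_nil hqnn).1 hz
        have := (hDP e).1 (hqs e he)
        exact this.2 ((hmP e).2 (hcl e this.1 ⟨z, hzp, hze⟩))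
      have hPsupp : ∀ z ∈ q.support, ∀ e, z ∈ e → e ∉ P := by
        intro z hz e hze heP
        exact hsupp z hz (Walk.mem_support_of_mem_edges ((hmP e).1 heP) hze)
      have hQA : ∀ C : Finset (Sym2 V), q.edges.toFinset ∩ (C \ P) = q.edges.toFinset ∩ C := by
        intro C
        ext e
        simp only [Finset.mem_inter, List.mem_toFinset, Finset.mem_sdiff]
        have := hqP e
        tauto
      rw [hQA, hQA] at hqcard
      refine ⟨x, y, q, ⟨hq, ?_, ?_, hodd, ?_⟩, ?_, ?_, hqcard⟩
      · rintro ⟨e, he, hxe⟩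
        exact hx ⟨e, Finset.mem_sdiff.2 ⟨he, hPsupp x (by simp) e hxe⟩, hxe⟩
      · rintro ⟨e, he, hye⟩
        exact hy ⟨e, Finset.mem_sdiff.2 ⟨he, hPsupp y (by simp) e hye⟩, hye⟩
      · intro i h
        rw [← halt i h, Finset.mem_sdiff]
        have := hqP _ (List.get_mem q.edges ⟨i, h⟩)
        tauto
      · intro e he
        exact ((hDP e).1 (hqs e he)).1
      · rintro e he ⟨z, hz, hze⟩
        exact hqc e ((hDP e).2 ⟨he, hPsupp z hz e hze⟩) ⟨z, hz, hze⟩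
    · refine ⟨v, u, p, ⟨hp.path, ?_, huA, hl, ?_⟩, hp.sub, hcl, ?_⟩
      · rintro ⟨f, hf, hvf⟩
        have hfp : f ∈ p.edges := by
          by_cases hfB : f ∈ B
          · exact hp.odd hl f hfB hvf
          · exact hterm f (Finset.mem_symmDiff.2 (Or.inl ⟨hf, hfB⟩)) hvf
        exact Nat.not_even_iff_odd.2 hl ((hp.endp f hfp hvf).1 hf)
      · intro i h
        rw [List.get_eq_getElem, hp.alt i h, Nat.even_sub h.le]
        rw [← Nat.not_even_iff_odd] at hl ⊢
        tauto
      · obtain ⟨a, ha⟩ := hl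
        omega

theorem aux_swap {V : Type*} [DecidableEq V] {G : SimpleGraph V} {A B P : Finset (Sym2 V)}
    (hA : IsMatching G A) (hB : IsMatching G B) (hP : P ⊆ A ∆ B)
    (hcl : ∀ e ∈ P, ∀ f ∈ A ∆ B, ∀ v, v ∈ e → v ∈ f → f ∈ P) :
    IsMatching G ((A \ P) ∪ (P ∩ B)) := by
  have key : ∀ e ∈ A \ P, ∀ f ∈ P ∩ B, ∀ v, v ∈ e → v ∉ f := by
    intro e he f hf v hve hvf
    rw [Finset.mem_sdiff] at he
    rw [Finset.mem_inter] at hf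
    by_cases heB : e ∈ B
    · have hne : e ≠ f := by
        rintro rfl
        exact he.2 hf.1
      exact hB.2 e heB f hf.2 hne v hve hvf
    · exact he.2 (hcl f hf.1 e (Finset.mem_symmDiff.2 (Or.inl ⟨he.1, heB⟩)) v hvf hve)
  constructor
  · intro e he
    rcases Finset.mem_union.1 he with h | h
    · exact hA.1 e (Finset.mem_sdiff.1 h).1
    · exact hB.1 e (Finset.mem_inter.1 h).2
  · intro e he f hf hne v hve hvf
    rcases Finset.mem_union.1 he with h | h <;> rcases Finset.mem_union.1 hf with h' | h'
    · exact hA.2 e (Finset.mem_sdiff.1 h).1 f (Finset.mem_sdiff.1 h').1 hne v hve hvf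
    · exact key e h f h' v hve hvf
    · exact key f h' e h v hvf hve
    · exact hB.2 e (Finset.mem_inter.1 h).2 f (Finset.mem_inter.1 h').2 hne v hve hvf

theorem aux_swap_sum {V : Type*} [DecidableEq V] (A B P : Finset (Sym2 V)) (wt : Sym2 V → ℝ) :
    ∑ e ∈ (A \ P) ∪ (P ∩ B), wt e = ∑ e ∈ A, wt e - ∑ e ∈ P ∩ A, wt e + ∑ e ∈ P ∩ B, wt e := by
  rw [Finset.sum_union]
  · have := Finset.sum_inter_add_sum_sdiff A P wt
    rw [Finset.inter_comm] at this
    linarith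
  · rw [Finset.disjoint_left]
    intro e he he'
    exact (Finset.mem_sdiff.1 he).2 (Finset.mem_inter.1 he').1

theorem aux_swap_card {V : Type*} [DecidableEq V] (A B P : Finset (Sym2 V)) :
    ((A \ P) ∪ (P ∩ B)).card + (P ∩ A).card = A.card + (P ∩ B).card := by
  have h := aux_swap_sum A B P (fun _ => 1)
  simp only [Finset.sum_const, nsmul_eq_mul, mul_one] at h
  have hfin : ((((A \ P) ∪ (P ∩ B)).card + (P ∩ A).card : ℕ) : ℝ)
      = ((A.card + (P ∩ B).card : ℕ) : ℝ) := by
    push_cast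
    linarith
  exact_mod_cast hfin

/-- Let `Mk` be a maximum-weight `k`-matching and `Mk1` a maximum-weight
`(k+1)`-matching of `G`. Then some connected component of the symmetric difference
`Mk ∆ Mk1` is an augmenting path relative to `Mk` whose weight-gain equals
`wt(Mk1) - wt(Mk)`. -/
theorem stmt_11 {V : Type*} [DecidableEq V] (G : SimpleGraph V) (wt : Sym2 V → ℝ)
    (k : ℕ) (Mk Mk1 : Finset (Sym2 V))
    (hMk : IsMatching G Mk) (hMkcard : Mk.card = k)
    (hMkmax : ∀ M' : Finset (Sym2 V), IsMatching G M' → M'.card = k →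
      ∑ e ∈ M', wt e ≤ ∑ e ∈ Mk, wt e)
    (hMk1 : IsMatching G Mk1) (hMk1card : Mk1.card = k + 1)
    (hMk1max : ∀ M' : Finset (Sym2 V), IsMatching G M' → M'.card = k + 1 →
      ∑ e ∈ M', wt e ≤ ∑ e ∈ Mk1, wt e) :
    ∃ (u v : V) (p : G.Walk u v),
      IsAugPath G Mk p ∧
      -- the edges of `p` lie in the symmetric difference, and `p` is a whole
      -- connected component of it
      p.edges.toFinset ⊆ Mk ∆ Mk1 ∧
      (∀ e ∈ Mk ∆ Mk1, (∃ x ∈ p.support, x ∈ e) → e ∈ p.edges) ∧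
      Gain wt Mk p.edges.toFinset = ∑ e ∈ Mk1, wt e - ∑ e ∈ Mk, wt e := by
  obtain ⟨u, v, p, hp, hs, hc, hcard⟩ :=
    aux_exists_aug (k + 1) Mk Mk1 hMk hMk1 (by omega) (by omega)
  have hsub : p.edges.toFinset ⊆ Mk ∆ Mk1 := fun e he => hs e (List.mem_toFinset.1 he)
  refine ⟨u, v, p, hp, hsub, hc, ?_⟩
  have hcl : ∀ e ∈ p.edges.toFinset, ∀ f ∈ Mk ∆ Mk1, ∀ v, v ∈ e → v ∈ f →
      f ∈ p.edges.toFinset := by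
    intro e he f hf v hve hvf
    rw [List.mem_toFinset] at he ⊢
    exact hc f hf ⟨v, Walk.mem_support_of_mem_edges he hve, hvf⟩
  set P := p.edges.toFinset
  have hcomm : Mk ∆ Mk1 = Mk1 ∆ Mk := symmDiff_comm _ _
  have hm1 := aux_swap hMk hMk1 hsub hcl
  have hm2 := aux_swap hMk1 hMk (hcomm ▸ hsub) (hcomm ▸ hcl)
  have hc1 := aux_swap_card Mk Mk1 P
  have hc2 := aux_swap_card Mk1 Mk P
  have h1 := hMk1max _ hm1 (by omega)
  have h2 := hMkmax _ hm2 (by omega)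
  rw [aux_swap_sum] at h1 h2
  have hPd : P \ Mk = P ∩ Mk1 := by
    ext e
    have := @hsub e
    rw [Finset.mem_symmDiff] at this
    rw [Finset.mem_sdiff, Finset.mem_inter]
    tauto
  unfold Gain
  rw [hPd]
  linarith
end
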